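/- Fix n ≥ 1 and a subspace S^n ⊆ ⋀^n V*. Set S¹ := span{ι_U α : U ∈ ⋀^{n−1} V, α ∈ S^n} ⊆ V*, K₁ := {v ∈ V : θ(v) = 0 for all θ ∈ S¹}, and K_n := {U ∈ ⋀^n V : ι_U α = 0 for all α ∈ S^n}. Let (S¹)^{∧a} ⊆ ⋀^a V* denote the span of a-fold exterior products of elements of S¹, and let ♯_n : S^n → V / K₁ be a linear map. Then for every a ≥ 1 there exists a unique linear map ♯̃₁ : (S¹)^{∧a} → ⋀^{a−1} V* ⊗ (⋀^n V / K_n) such that for all α ∈ S^n and all β ∈ (S¹)^{∧a}: ι_{♯_n(α)} β = (−1)^{n+1−a} ι_{♯̃₁(β)} α. (Both sides are well defined: ι_v β = ι_{v'} β whenever v − v' ∈ K₁ and β ∈ (S¹)^{∧a}, and ι_U α = 0 for all U ∈ K_n and α ∈ S^n.) -/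

import Mathlib

/-!
The space `Sⁿ` is finite-dimensional and, by the definition of `K_n`, the pairing between
`⋀ⁿ V / K_n` and `Sⁿ` is perfect. Hence, with `W = ⋀^(a-1) V*`, contraction identifies
`W ⊗ (⋀ⁿ V / K_n)` with `Hom(Sⁿ, W)` (`contractionHom_bijective`): the class of `T` goes to
`α ↦ ι_T α` (`contractionHom_lTensor`). The required identity says that this identification sends
`♯̃₁(β)` to the map `α ↦ ± ι_{♯_n(α)} β`, which determines `♯̃₁(β)` and makes it linear in `β`.

The one point to check is that `ι_{♯_n(α)} β` makes sense, i.e. that `ι_v β = 0` for `v ∈ K₁` and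
`β ∈ (S¹)^{∧a}` (`contrBil_eq_zero_of_mem_sPow`). In the shuffle expansion of a wedge product
`θ ∧ η` evaluated on a family containing `v`, each term feeds `v` to `θ` or to `η`, so forms
killed by `v` are stable under the wedge product (`KilledBy.formWedgeBil`).
-/

open Module
open scoped TensorProduct

noncomputable section

namespace GPB

variable {V : Type*} [AddCommGroup V] [Module ℝ V]

/-- The product of a `p`-vector and a `q`-vector is a `(p+q)`-vector. -/
theorem wedge_mem {p q r : ℕ} (h : p + q = r) {x y : ExteriorAlgebra ℝ V}
    (hx : x ∈ ⋀[ℝ]^p V) (hy : y ∈ ⋀[ℝ]^q V) : x * y ∈ ⋀[ℝ]^r V := by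
  subst h
  show x * y ∈ LinearMap.range (ExteriorAlgebra.ι ℝ : V →ₗ[ℝ] ExteriorAlgebra ℝ V) ^ (p + q)
  rw [pow_add]
  exact Submodule.mul_mem_mul hx hy

/-- The wedge (exterior) product of multivectors, as a bilinear map
`⋀^p V × ⋀^q V → ⋀^r V` (where `p + q = r`). -/
def wedgeBil {p q r : ℕ} (h : p + q = r) :
    ⋀[ℝ]^p V →ₗ[ℝ] ⋀[ℝ]^q V →ₗ[ℝ] ⋀[ℝ]^r V :=
  LinearMap.mk₂ ℝ (fun u w => ⟨u.1 * w.1, wedge_mem h u.2 w.2⟩)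
    (fun u u' w => Subtype.ext (by simp [add_mul]))
    (fun c u w => Subtype.ext (by simp [smul_mul_assoc]))
    (fun u w w' => Subtype.ext (by simp [mul_add]))
    (fun c u w => Subtype.ext (by simp [mul_smul_comm]))

/-- Contraction of an `r`-form by a `p`-multivector (`p + q = r`):
`(ι_u α) w = α (u ∧ w)`.  Bilinear in `u` and `α`. -/
def contrBil {p q r : ℕ} (h : p + q = r) :
    ⋀[ℝ]^p V →ₗ[ℝ] Dual ℝ (⋀[ℝ]^r V) →ₗ[ℝ] Dual ℝ (⋀[ℝ]^q V) :=
  (LinearMap.llcomp ℝ (⋀[ℝ]^q V) (⋀[ℝ]^r V) ℝ).flip.comp (wedgeBil h)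

/-- A vector `X : V` as an element of `⋀^1 V`. -/
def ιOne (X : V) : ⋀[ℝ]^1 V :=
  ⟨ExteriorAlgebra.ι ℝ X, by simpa only [pow_one] using LinearMap.mem_range_self _ X⟩

/-- `ιMulti` with values in the `n`-th exterior power. -/
def ιMultiP (n : ℕ) : V [⋀^Fin n]→ₗ[ℝ] (⋀[ℝ]^n V) :=
  (ExteriorAlgebra.ιMulti ℝ n).codRestrict (⋀[ℝ]^n V)
    (fun v => ExteriorAlgebra.ιMulti_range ℝ n (Set.mem_range_self v))

/-- A linear functional on `⋀^n V`, seen as an alternating `n`-form on `V`. -/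
def toAlt {n : ℕ} : Dual ℝ (⋀[ℝ]^n V) →ₗ[ℝ] (V [⋀^Fin n]→ₗ[ℝ] ℝ) where
  toFun θ := θ.compAlternatingMap (ιMultiP n)
  map_add' _ _ := rfl
  map_smul' _ _ := rfl

/-- A linear map on `⋀^n V` built out of an alternating `n`-multilinear map. -/
def extendL {n : ℕ} {N : Type*} [AddCommGroup N] [Module ℝ N] :
    (V [⋀^Fin n]→ₗ[ℝ] N) →ₗ[ℝ] (⋀[ℝ]^n V →ₗ[ℝ] N) :=
  (LinearMap.lcomp ℝ N (Submodule.subtype (⋀[ℝ]^n V))).comp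
    (ExteriorAlgebra.liftAlternating.comp
      (LinearMap.single ℝ (fun i => V [⋀^Fin i]→ₗ[ℝ] N) n))

/-- The wedge product of exterior forms (functionals on exterior powers),
as a bilinear map. -/
def formWedgeBil {r m t : ℕ} (h : r + m = t) :
    Dual ℝ (⋀[ℝ]^r V) →ₗ[ℝ] Dual ℝ (⋀[ℝ]^m V) →ₗ[ℝ] Dual ℝ (⋀[ℝ]^t V) := by
  subst h
  exact TensorProduct.curry
    (extendL.comp
      (((AlternatingMap.domDomCongrₗ ℝ finSumFinEquiv).toLinearMap).comp
        ((LinearMap.compAlternatingMapₗ ℝ (TensorProduct.lid ℝ ℝ).toLinearMap).comp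
          (AlternatingMap.domCoprod'.comp (TensorProduct.map toAlt toAlt)))))

/-- Contraction of a `c`-form `γ` by a multivector-valued form
`T ∈ ⋀^r V* ⊗ ⋀^q V`:  on decomposables, `ι_{θ ⊗ v} γ = θ ∧ (ι_v γ)`.
Here `q + s = c` and `r + s = d`. -/
def iotaT {r q c d : ℕ} (s : ℕ) (h₁ : q + s = c) (h₂ : r + s = d) :
    (Dual ℝ (⋀[ℝ]^r V) ⊗[ℝ] ⋀[ℝ]^q V) →ₗ[ℝ]
      Dual ℝ (⋀[ℝ]^c V) →ₗ[ℝ] Dual ℝ (⋀[ℝ]^d V) := by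
  subst h₁; subst h₂
  exact TensorProduct.lift
    (((LinearMap.llcomp ℝ (Dual ℝ (⋀[ℝ]^(q+s) V)) (Dual ℝ (⋀[ℝ]^s V))
          (Dual ℝ (⋀[ℝ]^(r+s) V))).comp (formWedgeBil rfl)).compl₂ (contrBil rfl))

/-- The canonical map `⋀^k V* ⊗ ⋀^a V → Hom(⋀^a V*, ⋀^k V*)`,
`θ ⊗ u ↦ (α ↦ α (u) • θ)`. -/
def pairHom (k a : ℕ) :
    (Dual ℝ (⋀[ℝ]^k V) ⊗[ℝ] ⋀[ℝ]^a V) →ₗ[ℝ]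
      (Dual ℝ (⋀[ℝ]^a V) →ₗ[ℝ] Dual ℝ (⋀[ℝ]^k V)) :=
  (dualTensorHom ℝ (Dual ℝ (⋀[ℝ]^a V)) (Dual ℝ (⋀[ℝ]^k V))).comp
    ((TensorProduct.map (Dual.eval ℝ (⋀[ℝ]^a V)) LinearMap.id).comp
      (TensorProduct.comm ℝ (Dual ℝ (⋀[ℝ]^k V)) (⋀[ℝ]^a V)).toLinearMap)


/-- The span of `a`-fold exterior products of elements of a space `S1` of `1`-forms. -/
def sPow (S1 : Submodule ℝ (Dual ℝ (⋀[ℝ]^1 V))) :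
    (a : ℕ) → Submodule ℝ (Dual ℝ (⋀[ℝ]^a V))
  | 0 => ⊤
  | (a + 1) => Submodule.span ℝ
      {x | ∃ θ ∈ S1, ∃ η ∈ sPow S1 a,
        x = formWedgeBil (show 1 + a = a + 1 by omega) θ η}

theorem extendL_ιMultiP {n : ℕ} (f : V [⋀^Fin n]→ₗ[ℝ] ℝ) (x : Fin n → V) :
    extendL f (ιMultiP n x) = f x := by
  change ExteriorAlgebra.liftAlternating (Pi.single n f) (ExteriorAlgebra.ιMulti ℝ n x) = _
  rw [ExteriorAlgebra.liftAlternating_apply_ιMulti, Pi.single_eq_same]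

/-- Two forms agree as soon as they agree on decomposable multivectors. -/
theorem form_ext {n : ℕ} {θ η : Dual ℝ (⋀[ℝ]^n V)}
    (h : ∀ x, θ (ιMultiP n x) = η (ιMultiP n x)) : θ = η :=
  exteriorPower.linearMap_ext (AlternatingMap.ext h)

theorem exists_eq_ιMultiP_one (u : ⋀[ℝ]^1 V) : ∃ X : V, ∀ x : Fin 1 → V, x 0 = X →
    ιMultiP 1 x = u := by
  obtain ⟨u, hu⟩ := u
  have hu' := hu
  change u ∈ LinearMap.range (ExteriorAlgebra.ι ℝ : V →ₗ[ℝ] ExteriorAlgebra ℝ V) ^ 1 at hu'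
  rw [pow_one] at hu'
  obtain ⟨X, rfl⟩ := hu'
  refine ⟨X, fun x hx => Subtype.ext ?_⟩
  change ExteriorAlgebra.ιMulti ℝ 1 x = _
  simp [hx]

/-- The shuffle expansion of the wedge product. -/
theorem formWedgeBil_ιMultiP {r m : ℕ} (θ : Dual ℝ (⋀[ℝ]^r V)) (η : Dual ℝ (⋀[ℝ]^m V))
    (x : Fin (r + m) → V) :
    formWedgeBil rfl θ η (ιMultiP (r + m) x) =
      ∑ σ : Equiv.Perm.ModSumCongr (Fin r) (Fin m), TensorProduct.lid ℝ ℝ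
        (AlternatingMap.domCoprod.summand (toAlt θ) (toAlt η) σ
          (fun i => x (finSumFinEquiv i))) := by
  refine (extendL_ιMultiP _ x).trans ?_
  change TensorProduct.lid ℝ ℝ (((∑ σ : Equiv.Perm.ModSumCongr (Fin r) (Fin m),
    AlternatingMap.domCoprod.summand (toAlt θ) (toAlt η) σ) :
      MultilinearMap ℝ (fun _ : Fin r ⊕ Fin m => V) (ℝ ⊗[ℝ] ℝ))
        (fun i => x (finSumFinEquiv i))) = _
  rw [sum_apply, map_sum]

/-- The form `β` vanishes on every decomposable multivector having `X` among its factors. For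
`a = 0` there are no factors and the condition is vacuous. -/
def KilledBy (X : V) {a : ℕ} (β : Dual ℝ (⋀[ℝ]^a V)) : Prop :=
  ∀ (x : Fin a → V) (i : Fin a), x i = X → β (ιMultiP a x) = 0

/-- In each term of the shuffle expansion, the factor `X` is an argument of one of the two forms,
and that form vanishes. -/
theorem KilledBy.formWedgeBil {X : V} {r m t : ℕ} (h : r + m = t) {θ : Dual ℝ (⋀[ℝ]^r V)}
    {η : Dual ℝ (⋀[ℝ]^m V)} (hθ : KilledBy X θ) (hη : KilledBy X η) :
    KilledBy X (formWedgeBil h θ η) := by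
  subst h
  intro x i hi
  rw [formWedgeBil_ιMultiP]
  refine Finset.sum_eq_zero fun σ _ => ?_
  induction σ using Quotient.inductionOn' with | _ σ
  rw [AlternatingMap.domCoprod.summand_mk'']
  change TensorProduct.lid ℝ ℝ (Equiv.Perm.sign σ •
    ((θ (ιMultiP r fun j => x (finSumFinEquiv (σ (Sum.inl j))))) ⊗ₜ[ℝ]
      (η (ιMultiP m fun j => x (finSumFinEquiv (σ (Sum.inr j))))))) = 0
  obtain ⟨k, rfl⟩ : ∃ k, finSumFinEquiv (σ k) = i :=
    ⟨σ.symm (finSumFinEquiv.symm i), by simp⟩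
  rcases k with j | j
  · rw [hθ _ j hi, TensorProduct.zero_tmul, smul_zero, map_zero]
  · rw [hη _ j hi, TensorProduct.tmul_zero, smul_zero, map_zero]

theorem killedBy_of_mem_sPow {X : V} {S1 : Submodule ℝ (Dual ℝ (⋀[ℝ]^1 V))}
    (h : ∀ θ ∈ S1, KilledBy X θ) (a : ℕ) {β : Dual ℝ (⋀[ℝ]^a V)} (hβ : β ∈ sPow S1 a) :
    KilledBy X β := by
  induction a with
  | zero => exact fun _ i => i.elim0
  | succ a ih =>
    intro x i hi
    induction hβ using Submodule.span_induction with
    | mem β hβ =>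
      obtain ⟨θ, hθ, η, hη, rfl⟩ := hβ
      exact (h θ hθ).formWedgeBil _ (ih hη) x i hi
    | zero => rfl
    | add β γ _ _ hβ hγ => rw [LinearMap.add_apply, hβ, hγ, add_zero]
    | smul c β _ hβ => rw [LinearMap.smul_apply, hβ, smul_zero]

/-- Contraction of a form in `(S¹)^{∧a}` by a vector depends only on the vector modulo `K₁`. -/
theorem contrBil_eq_zero_of_mem_sPow {S1 : Submodule ℝ (Dual ℝ (⋀[ℝ]^1 V))} {a b : ℕ}
    (h : 1 + b = a) {v : ⋀[ℝ]^1 V} (hv : v ∈ S1.dualCoannihilator)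
    {β : Dual ℝ (⋀[ℝ]^a V)} (hβ : β ∈ sPow S1 a) : contrBil h v β = 0 := by
  obtain ⟨X, hX⟩ := exists_eq_ιMultiP_one v
  have hk : KilledBy X β := killedBy_of_mem_sPow (fun θ hθ x i hi => by
    rw [hX x (by rwa [Subsingleton.elim i 0] at hi)]
    exact (Submodule.mem_dualCoannihilator _).1 hv θ hθ) a hβ
  subst h
  refine form_ext fun x => ?_
  have hw : wedgeBil rfl v (ιMultiP b x) = ιMultiP (1 + b) (Fin.append (fun _ => X) x) := by
    rw [← hX (fun _ => X) rfl]
    exact Subtype.ext (ExteriorAlgebra.ιMulti_mul_ιMulti _ _)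
  change β (wedgeBil rfl v (ιMultiP b x)) = 0
  rw [hw]
  exact hk _ (Fin.castAdd b 0) (by simp)

/-- Contraction of an `n`-form by `θ ⊗ u` with `u` an `n`-vector is multiplication of `θ` by the
number `α u`. -/
theorem iotaT_zero_tmul {r n : ℕ} (θ : Dual ℝ (⋀[ℝ]^r V)) (u : ⋀[ℝ]^n V)
    (α : Dual ℝ (⋀[ℝ]^n V)) :
    iotaT 0 (show n + 0 = n by omega) (show r + 0 = r by omega) (θ ⊗ₜ[ℝ] u) α = α u • θ := by
  change formWedgeBil (rfl : r + 0 = r + 0) θ (contrBil (rfl : n + 0 = n + 0) u α) = _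
  refine form_ext fun x => (formWedgeBil_ιMultiP θ _ x).trans ?_
  -- A permutation of `Fin r ⊕ Fin 0` only permutes the first summand, so there is one shuffle.
  have hall : ∀ σ : Equiv.Perm.ModSumCongr (Fin r) (Fin 0), σ = Quotient.mk'' 1 := by
    intro σ
    induction σ using Quotient.inductionOn' with | _ σ
    refine Quotient.sound' (QuotientGroup.leftRel_apply.2 ?_)
    refine ⟨((Equiv.sumEmpty (Fin r) (Fin 0)).permCongr (σ⁻¹ * 1), 1), ?_⟩
    ext i
    rcases i with i | i
    · have : ∀ z : Fin r ⊕ Fin 0, Sum.inl (Equiv.sumEmpty (Fin r) (Fin 0) z) = z := by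
        rintro (z | z)
        · rfl
        · exact z.elim0
      simp [this]
    · exact i.elim0
  refine (Fintype.sum_eq_single (Quotient.mk'' 1) fun σ hσ => absurd (hall σ) hσ).trans ?_
  rw [AlternatingMap.domCoprod.summand_mk'']
  have hone : wedgeBil (rfl : n + 0 = n + 0) u (ιMultiP 0 fun j => x (Fin.natAdd r j)) = u := by
    refine Subtype.ext ?_
    change u.1 * ExteriorAlgebra.ιMulti ℝ 0 _ = u.1
    rw [ExteriorAlgebra.ιMulti_zero_apply, mul_one]
  rw [Equiv.Perm.sign_one, one_smul]
  change TensorProduct.lid ℝ ℝ ((θ (ιMultiP r x)) ⊗ₜ[ℝ]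
    (α (wedgeBil (rfl : n + 0 = n + 0) u (ιMultiP 0 fun j => x (Fin.natAdd r j))))) = _
  rw [hone, TensorProduct.lid_tmul, LinearMap.smul_apply, smul_eq_mul, smul_eq_mul, mul_comm]
  rfl

/-- The map `W ⊗ (M / S^⊥) → Hom(S, W)`, `θ ⊗ [u] ↦ (α ↦ α(u) θ)`, for a space `S` of linear
functionals on `M`. -/
def contractionHom {M W : Type*} [AddCommGroup M] [Module ℝ M] [AddCommGroup W] [Module ℝ W]
    (S : Submodule ℝ (Dual ℝ M)) : (W ⊗[ℝ] (M ⧸ S.dualCoannihilator)) →ₗ[ℝ] (S →ₗ[ℝ] W) :=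
  (dualTensorHom ℝ S W).comp ((TensorProduct.comm ℝ W (Dual ℝ S)).toLinearMap.comp
    (S.quotDualCoannihilatorToDual.lTensor W))

theorem contractionHom_bijective {M W : Type*} [AddCommGroup M] [Module ℝ M] [AddCommGroup W]
    [Module ℝ W] (S : Submodule ℝ (Dual ℝ M)) [FiniteDimensional ℝ S] :
    Function.Bijective (contractionHom (W := W) S) := by
  let _ : AddCommGroup S := inferInstance
  have h := Subspace.quotDualCoannihilatorToDual_bijective S
  exact (dualTensorHom_bijective (R := ℝ) (M := S) (N := W)).comp
    ((TensorProduct.comm ℝ W (Dual ℝ S)).bijective.comp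
      ((LinearEquiv.ofBijective _ h).lTensor W).bijective)

theorem contractionHom_lTensor {r n : ℕ} (S : Submodule ℝ (Dual ℝ (⋀[ℝ]^n V)))
    (T : Dual ℝ (⋀[ℝ]^r V) ⊗[ℝ] ⋀[ℝ]^n V) (α : S) :
    contractionHom S (S.dualCoannihilator.mkQ.lTensor _ T) α =
      iotaT 0 (show n + 0 = n by omega) (show r + 0 = r by omega) T (α : Dual ℝ (⋀[ℝ]^n V)) := by
  induction T using TensorProduct.induction_on with
  | zero => simp only [map_zero, LinearMap.zero_apply]
  | tmul θ u => rw [iotaT_zero_tmul]; rfl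
  | add T T' h h' => simp only [map_add, LinearMap.add_apply, h, h']

/-- The pairing `([v], β) ↦ ι_v β` between `⋀¹ V / K₁` and `(S¹)^{∧a}`. -/
def contrQuot (S1 : Submodule ℝ (Dual ℝ (⋀[ℝ]^1 V))) {a b : ℕ} (h : 1 + b = a) :
    (⋀[ℝ]^1 V ⧸ S1.dualCoannihilator) →ₗ[ℝ] (sPow S1 a) →ₗ[ℝ] Dual ℝ (⋀[ℝ]^b V) :=
  let f : ⋀[ℝ]^1 V →ₗ[ℝ] (sPow S1 a) →ₗ[ℝ] Dual ℝ (⋀[ℝ]^b V) :=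
    (contrBil h).compl₂ (sPow S1 a).subtype
  S1.dualCoannihilator.liftQ (τ₁₂ := RingHom.id ℝ) (M₂ := (sPow S1 a) →ₗ[ℝ] Dual ℝ (⋀[ℝ]^b V)) f
    fun _ hv => LinearMap.ext fun β => contrBil_eq_zero_of_mem_sPow h hv β.2

/-- Existence and uniqueness of the extension `♯̃₁` of `♯₁` to
`(S¹)^{∧a}`, characterized by `ι_{♯_n(α)} β = (-1)^{n+1-a} ι_{♯̃₁(β)} α`. -/
theorem sharp_one_extension_exists_unique
    [FiniteDimensional ℝ V] (n : ℕ) (hn : 1 ≤ n)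
    (Sn : Submodule ℝ (Dual ℝ (⋀[ℝ]^n V)))
    (S1 : Submodule ℝ (Dual ℝ (⋀[ℝ]^1 V)))
    (hS1 : S1 = Submodule.span ℝ
      {θ | ∃ (U : ⋀[ℝ]^(n - 1) V) (α : Dual ℝ (⋀[ℝ]^n V)), α ∈ Sn ∧
        θ = contrBil (show (n - 1) + 1 = n by omega) U α})
    (sharpn : Sn →ₗ[ℝ] (⋀[ℝ]^1 V ⧸ S1.dualCoannihilator))
    (a : ℕ) (ha : 1 ≤ a) :
    ∃! tsharp : (sPow S1 a) →ₗ[ℝ]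
        (Dual ℝ (⋀[ℝ]^(a - 1) V) ⊗[ℝ] (⋀[ℝ]^n V ⧸ Sn.dualCoannihilator)),
      ∀ (α : Sn) (β : sPow S1 a),
        ∀ v : ⋀[ℝ]^1 V, Submodule.Quotient.mk v = sharpn α →
        ∀ T : Dual ℝ (⋀[ℝ]^(a - 1) V) ⊗[ℝ] ⋀[ℝ]^n V,
          LinearMap.lTensor (Dual ℝ (⋀[ℝ]^(a - 1) V)) Sn.dualCoannihilator.mkQ T
            = tsharp β →
        contrBil (show 1 + (a - 1) = a by omega) v (β : Dual ℝ (⋀[ℝ]^a V))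
          = ((-1 : ℝ)) ^ (n + 1 + a) •
              iotaT 0 (show n + 0 = n by omega) (show (a - 1) + 0 = a - 1 by omega) T
                (α : Dual ℝ (⋀[ℝ]^n V)) := by
  let W := Dual ℝ (⋀[ℝ]^(a - 1) V)
  let e : (W ⊗[ℝ] (⋀[ℝ]^n V ⧸ Sn.dualCoannihilator)) ≃ₗ[ℝ] (Sn →ₗ[ℝ] W) :=
    LinearEquiv.ofBijective (contractionHom Sn) (contractionHom_bijective Sn)
  have hc : 1 + (a - 1) = a := by omega
  -- The sign is its own inverse.
  have hsq : ((-1 : ℝ) ^ (n + 1 + a)) * (-1) ^ (n + 1 + a) = 1 := by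
    rw [← mul_pow]; norm_num
  let G : (sPow S1 a) →ₗ[ℝ] (Sn →ₗ[ℝ] W) := ((contrQuot S1 hc).comp sharpn).flip
  have hG : ∀ (α : Sn) (β : sPow S1 a) (v : ⋀[ℝ]^1 V), Submodule.Quotient.mk v = sharpn α →
      G β α = contrBil hc v (β : Dual ℝ (⋀[ℝ]^a V)) := by
    intro α β v hv
    change contrQuot S1 hc (sharpn α) β = _
    rw [← hv]
    rfl
  refine ⟨e.symm.toLinearMap.comp ((-1 : ℝ) ^ (n + 1 + a) • G), ?_, ?_⟩
  · intro α β v hv T hT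
    rw [← contractionHom_lTensor Sn T α, hT, ← hG α β v hv]
    change _ = _ • e (e.symm (((-1 : ℝ) ^ (n + 1 + a)) • G β)) α
    rw [LinearEquiv.apply_symm_apply, LinearMap.smul_apply, smul_smul, hsq, one_smul]
  · intro t ht
    refine LinearMap.ext fun β => ?_
    refine (LinearEquiv.eq_symm_apply e).2 (LinearMap.ext fun α => ?_)
    obtain ⟨v, hv⟩ := Submodule.Quotient.mk_surjective _ (sharpn α)
    obtain ⟨T, hT⟩ := LinearMap.lTensor_surjective W
      (Submodule.mkQ_surjective Sn.dualCoannihilator) (t β)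
    have h := ht α β v hv T hT
    rw [← contractionHom_lTensor Sn T α, hT, ← hG α β v hv] at h
    change contractionHom Sn (t β) α = ((-1 : ℝ) ^ (n + 1 + a)) • G β α
    rw [h, smul_smul, hsq, one_smul]


end GPB
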